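/- Let q = p^m be a prime power and k a positive divisor of q−1 with k ≠ q−1, and let A be the adjacency matrix of the generalized Paley graph Γ(k,q). Then the only eigenvalue of A of maximal modulus (q−1)/k is (q−1)/k itself: for every λ ∈ spectrum ℂ A, if the complex absolute value of λ equals (q−1)/k then λ = (q−1)/k. -/

import Mathlib

open scoped Classical

/-!
The matrix is diagonalized by the additive characters `ψ` of `F`, with eigenvalues `∑ s ∈ R_k, ψ s`.
As `|ψ s| = 1`, such an eigenvalue has modulus `|R_k|` only if `ψ` is constant on `R_k`, with value
`c = ψ 1`, say. If `F` has characteristic `p`, then `c ^ p = ψ (p • 1) = ψ 0 = 1`; since the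
elements of the nontrivial group `R_k` sum to zero, also `c ^ |R_k| = ψ (∑ s ∈ R_k, s) = 1`.
But `p` does not divide `|R_k|`, hence `c = 1`.
-/

open Matrix

theorem spectrum_eq_range_of_basis_eigenvectors {ι K V : Type*} [Finite ι] [Field K]
    [AddCommGroup V] [Module K V] {f : Module.End K V} (b : Module.Basis ι K V) {μ : ι → K}
    (hf : ∀ i, f (b i) = μ i • b i) : spectrum K f = Set.range μ := by
  have := Fintype.ofFinite ι
  have hdiag : f = toLin b b (diagonal μ) := b.ext fun i => by
    rw [hf, toLin_self, Finset.sum_eq_single i]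
    · rw [diagonal_apply_eq]
    · intro j _ hji
      rw [diagonal_apply_ne μ hji, zero_smul]
    · exact fun hi => absurd (Finset.mem_univ i) hi
  rw [hdiag, spectrum_toLin, spectrum_diagonal]

theorem eq_of_card_mul_le_norm_sum {ι V : Type*} [NormedAddCommGroup V] [NormedSpace ℝ V]
    [StrictConvexSpace ℝ V] {s : Finset ι} {f : ι → V} {r : ℝ} (hf : ∀ i ∈ s, ‖f i‖ ≤ r)
    (hsum : s.card * r ≤ ‖∑ i ∈ s, f i‖) {i j : ι} (hi : i ∈ s) (hj : j ∈ s) : f i = f j := by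
  by_contra hij
  have hcard : (0 : ℝ) < s.card := Nat.cast_pos.mpr (Finset.card_pos.mpr ⟨i, hi⟩)
  have hmean : ‖∑ k ∈ s, (s.card : ℝ)⁻¹ • f k‖ < r :=
    norm_sum_lt_of_strictConvexSpace (fun _ _ => inv_nonneg.mpr hcard.le)
      (by rw [Finset.sum_const, nsmul_eq_mul, mul_inv_cancel₀ hcard.ne']) hi hj hij
      (inv_ne_zero hcard.ne') (inv_ne_zero hcard.ne') hf
  rw [← Finset.smul_sum, norm_smul, norm_inv, Real.norm_natCast, inv_mul_lt_iff₀ hcard] at hmean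
  exact hmean.not_ge hsum

theorem addChar_sum {ι A M : Type*} [AddCommMonoid A] [CommMonoid M] (ψ : AddChar A M)
    (s : Finset ι) (f : ι → A) : ψ (∑ i ∈ s, f i) = ∏ i ∈ s, ψ (f i) :=
  map_prod ψ.toMonoidHom (fun i => Multiplicative.ofAdd (f i)) s

theorem addChar_vecMul_circulant {G R : Type*} [AddGroup G] [Fintype G] [CommSemiring R]
    (ψ : AddChar G R) (v : G → R) : ψ ᵥ* circulant v = (∑ g, v g * ψ g) • ⇑ψ := by
  ext j
  calc
    ∑ i, ψ i * v (i - j) = ∑ g, ψ (g + j) * v g :=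
      Fintype.sum_equiv (Equiv.subRight j) _ _ fun i => by
        rw [Equiv.subRight_apply, sub_add_cancel]
    _ = (∑ g, v g * ψ g) * ψ j := by
      rw [Finset.sum_mul]
      exact Finset.sum_congr rfl fun g _ => by rw [AddChar.map_add_eq_mul]; ring

section Cayley

variable {G : Type*} [AddCommGroup G] [Fintype G]

theorem spectrum_transpose_circulant [DecidableEq G] (v : G → ℂ) :
    spectrum ℂ (circulant v)ᵀ = Set.range fun ψ : AddChar G ℂ => ∑ g, v g * ψ g := by
  rw [← spectrum_toLin']
  refine spectrum_eq_range_of_basis_eigenvectors (AddChar.complexBasis G) fun ψ => ?_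
  rw [AddChar.complexBasis_apply, toLin'_apply, mulVec_transpose, addChar_vecMul_circulant]

/-- The adjacency matrix of the Cayley digraph on `G` with connection set `S`, which has an arc
from `x` to `y` iff `y - x ∈ S`. -/
noncomputable def cayleyMatrix (S : Set G) : Matrix G G ℂ :=
  of fun x y => if y - x ∈ S then 1 else 0

theorem spectrum_cayleyMatrix [DecidableEq G] (S : Set G) [Fintype S] :
    spectrum ℂ (cayleyMatrix S) = Set.range fun ψ : AddChar G ℂ => ∑ s : S, ψ s := by
  have hcirc : cayleyMatrix S = (circulant fun g => if g ∈ S then 1 else 0)ᵀ := rfl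
  rw [hcirc, spectrum_transpose_circulant]
  congr! 2 with ψ
  simp only [ite_mul, one_mul, zero_mul, ← Finset.sum_filter]
  exact Finset.sum_subtype _ (fun g => by simp only [Finset.mem_filter_univ]) _

theorem exists_addChar_const_of_mem_spectrum_cayleyMatrix [DecidableEq G] {S : Set G} [Fintype S]
    {z : ℂ} (hz : z ∈ spectrum ℂ (cayleyMatrix S)) (hnorm : ‖z‖ = Nat.card S) :
    ∃ ψ : AddChar G ℂ, ∑ s : S, ψ s = z ∧ ∀ s ∈ S, ∀ t ∈ S, ψ s = ψ t := by
  rw [spectrum_cayleyMatrix] at hz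
  obtain ⟨ψ, rfl⟩ := hz
  refine ⟨ψ, rfl, fun s hs t ht => ?_⟩
  refine eq_of_card_mul_le_norm_sum (f := fun s : S => ψ s) (fun s _ => (ψ.norm_apply _).le) ?_
    (Finset.mem_univ ⟨s, hs⟩) (Finset.mem_univ ⟨t, ht⟩)
  rw [hnorm, mul_one, Finset.card_univ, Nat.card_eq_fintype_card]

end Cayley

theorem coprime_card_subgroup_units {K : Type*} [Ring K] [NoZeroDivisors K] (p : ℕ)
    [Fact p.Prime] [CharP K p] (H : Subgroup Kˣ) [Fintype H] : p.Coprime (Fintype.card H) := by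
  have : Nontrivial K := CharP.nontrivial_of_char_ne_one (Fact.out : p.Prime).ne_one
  rw [(Fact.out : p.Prime).coprime_iff_not_dvd, ← CharP.cast_eq_zero_iff K p]
  exact FiniteField.card_cast_subgroup_card_ne_zero H

theorem addChar_one_eq_one_of_const_on_subgroup {K M : Type*} [Ring K] [NoZeroDivisors K]
    [CommMonoid M] (p : ℕ) [Fact p.Prime] [CharP K p] {H : Subgroup Kˣ} [Finite H] (hH : H ≠ ⊥)
    {ψ : AddChar K M} (hψ : ∀ u ∈ H, ψ u = ψ 1) : ψ 1 = 1 := by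
  have := Fintype.ofFinite H
  have hpow_char : ψ 1 ^ p = 1 := by
    rw [← AddChar.map_nsmul_eq_pow, nsmul_one, CharP.cast_eq_zero, AddChar.map_zero_eq_one]
  have hpow_card : ψ 1 ^ Fintype.card H = 1 := calc
    ψ 1 ^ Fintype.card H = ∏ u : H, ψ (u : Kˣ) := by
      rw [Fintype.prod_congr _ _ fun u : H => hψ u u.2, Finset.prod_const, Finset.card_univ]
    _ = ψ (∑ u : H, ((u : Kˣ) : K)) := (addChar_sum ψ _ _).symm
    _ = 1 := by rw [FiniteField.sum_subgroup_units_eq_zero hH, AddChar.map_zero_eq_one]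
  have hgcd := pow_gcd_eq_one.mpr ⟨hpow_char, hpow_card⟩
  rwa [coprime_card_subgroup_units (K := K) p H, pow_one] at hgcd

theorem eq_card_of_mem_spectrum_cayleyMatrix_subgroup {F : Type*} [Field F] [Fintype F]
    [DecidableEq F] {H : Subgroup Fˣ} (hH : H ≠ ⊥) {z : ℂ}
    (hz : z ∈ spectrum ℂ (cayleyMatrix (Units.val '' (H : Set Fˣ)))) (hnorm : ‖z‖ = Nat.card H) :
    z = Nat.card H := by
  have hcard : Nat.card (Units.val '' (H : Set Fˣ)) = Nat.card H :=
    Nat.card_image_of_injective Units.val_injective _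
  rw [← hcard] at hnorm ⊢
  obtain ⟨ψ, rfl, hconst⟩ := exists_addChar_const_of_mem_spectrum_cayleyMatrix hz hnorm
  have h_one_mem : (1 : F) ∈ Units.val '' (H : Set Fˣ) := ⟨1, H.one_mem, rfl⟩
  have : Fact (ringChar F).Prime := ⟨CharP.char_is_prime F (ringChar F)⟩
  have h_one : ψ 1 = 1 := addChar_one_eq_one_of_const_on_subgroup (ringChar F) hH
    fun u hu => hconst u ⟨u, hu, rfl⟩ 1 h_one_mem
  have h_one_on (s : Units.val '' (H : Set Fˣ)) : ψ s = 1 := (hconst s s.2 1 h_one_mem).trans h_one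
  rw [Fintype.sum_congr _ _ h_one_on, Finset.sum_const, nsmul_one, Finset.card_univ,
    Nat.card_eq_fintype_card]

theorem mem_image_val_range_powMonoidHom {F : Type*} [CommGroupWithZero F] {k : ℕ} {x : F} :
    x ∈ Units.val '' ((powMonoidHom k : Fˣ →* Fˣ).range : Set Fˣ) ↔ ∃ z : F, z ≠ 0 ∧ z ^ k = x := by
  constructor
  · rintro ⟨_, ⟨u, rfl⟩, rfl⟩
    exact ⟨u, u.ne_zero, (Units.val_pow_eq_pow_val u k).symm⟩
  · rintro ⟨z, hz, rfl⟩
    exact ⟨Units.mk0 z hz ^ k, ⟨Units.mk0 z hz, rfl⟩, Units.val_pow_eq_pow_val _ k⟩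

theorem card_range_powMonoidHom_units {F : Type*} [Field F] [Fintype F] {k : ℕ}
    (hk : k ∣ Fintype.card F - 1) :
    Nat.card (powMonoidHom k : Fˣ →* Fˣ).range = (Fintype.card F - 1) / k := by
  rw [IsCyclic.card_powMonoidHom_range, Nat.card_eq_fintype_card, Fintype.card_units,
    Nat.gcd_eq_right hk]

theorem gpGraph_spectrum_max_modulus
    (p m k : ℕ) (hp : p.Prime) (hm : 1 ≤ m)
    (F : Type*) [Field F] [Fintype F] [DecidableEq F]
    (hF : Fintype.card F = p ^ m)
    (hk : 0 < k) (hkdvd : k ∣ p ^ m - 1) (hne : k ≠ p ^ m - 1)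
    (A : Matrix F F ℂ)
    (hA : ∀ x y : F, A x y = if ∃ z : F, z ≠ 0 ∧ z ^ k = y - x then 1 else 0) :
    ∀ z ∈ spectrum ℂ A,
      ‖z‖ = (((p ^ m - 1) / k : ℕ) : ℝ) →
      z = (((p ^ m - 1) / k : ℕ) : ℂ) := by
  intro z hz hnorm
  rw [← hF] at hkdvd hne hnorm ⊢
  let H : Subgroup Fˣ := (powMonoidHom k).range
  have hcard : Nat.card H = (Fintype.card F - 1) / k := card_range_powMonoidHom_units hkdvd
  have hH : H ≠ ⊥ := fun h => hne <| by
    rw [h, Subgroup.card_bot] at hcard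
    exact Nat.eq_of_dvd_of_div_eq_one hkdvd hcard.symm
  have hAH : A = cayleyMatrix (Units.val '' (H : Set Fˣ)) := by
    ext x y
    rw [hA, cayleyMatrix, of_apply]
    simp only [H, mem_image_val_range_powMonoidHom]
  rw [hAH] at hz
  rw [← hcard] at hnorm ⊢
  exact eq_card_of_mem_spectrum_cayleyMatrix_subgroup hH hz hnorm
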